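/- Let k ≥ 2, m = 2k−2, n = 2k, let C be a nondegenerate [2k,k]_{q^{2k−2}/q} code and let U be a system associated to C. Then C is a near MRD code (with minimum rank distance k) if and only if U is a (k−2)-scattered [2k,k]_{q^{2k−2}/q} system (which is then maximum (k−2)-scattered, since 2k = km/(k−1)). -/

import Mathlib

open Module Submodule

noncomputable section

variable (Fq Fqm : Type) [Field Fq] [Field Fqm] [Algebra Fq Fqm]

/-- Rank weight of a vector in `Fqm^n`: the `Fq`-dimension of the span of its entries. -/
def rankWeight {n : ℕ} (v : Fin n → Fqm) : ℕ :=
  finrank Fq (span Fq (Set.range v))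

/-- Minimum rank distance of a code. -/
def minRankDist {n : ℕ} (C : Submodule Fqm (Fin n → Fqm)) : ℕ :=
  sInf {w : ℕ | ∃ v ∈ C, v ≠ 0 ∧ rankWeight Fq Fqm v = w}

/-- Dual code with respect to the standard bilinear form. -/
def dualCode {n : ℕ} (C : Submodule Fqm (Fin n → Fqm)) : Submodule Fqm (Fin n → Fqm) where
  carrier := {v | ∀ c ∈ C, ∑ i, c i * v i = 0}
  add_mem' := by
    intro a b ha hb c hc
    simp only [Set.mem_setOf_eq] at ha hb
    simp only [Pi.add_apply, mul_add, Finset.sum_add_distrib, ha c hc, hb c hc, add_zero]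
  zero_mem' := by
    intro c hc
    simp
  smul_mem' := by
    intro t a ha c hc
    simp only [Set.mem_setOf_eq] at ha
    have key : (∑ i, c i * (t • a) i) = t * ∑ i, c i * a i := by
      rw [Finset.mul_sum]
      refine Finset.sum_congr rfl fun i _ => ?_
      simp only [Pi.smul_apply, smul_eq_mul]
      ring
    simp only [Set.mem_setOf_eq, key, ha c hc, mul_zero]

/-- An `Fqm`-subspace of `Fqm^n` is Galois closed if it is stable under the componentwise
action of every element of `Gal(Fqm/Fq)`. -/
def GaloisClosed {n : ℕ} (A : Submodule Fqm (Fin n → Fqm)) : Prop :=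
  ∀ θ : Fqm ≃ₐ[Fq] Fqm, ∀ v ∈ A, (fun i => θ (v i)) ∈ A

/-- The `s`-th generalized rank weight of a code `C`. -/
def grw {n : ℕ} (C : Submodule Fqm (Fin n → Fqm)) (s : ℕ) : ℕ :=
  sInf {x : ℕ | ∃ A : Submodule Fqm (Fin n → Fqm),
    GaloisClosed Fq Fqm A ∧ s ≤ finrank Fqm ↥(A ⊓ C) ∧ finrank Fqm ↥A = x}

/-- `G` (given as the tuple of its rows) is a generator matrix for `C`. -/
def IsGenMatrix {n k : ℕ} (C : Submodule Fqm (Fin n → Fqm)) (G : Fin k → Fin n → Fqm) : Prop :=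
  C = span Fqm (Set.range G)

/-- A code is nondegenerate if the `Fq`-span of the columns of a generator matrix has
`Fq`-dimension `n`. -/
def IsNondegenerate {n : ℕ} (k : ℕ) (C : Submodule Fqm (Fin n → Fqm)) : Prop :=
  ∃ G : Fin k → Fin n → Fqm, IsGenMatrix Fqm C G ∧
    finrank Fq ↥(span Fq (Set.range fun j : Fin n => fun i : Fin k => G i j)) = n

/-- `U` is a system associated to the code `C`: `U` is the `Fq`-span of the columns of some
generator matrix of `C`. -/
def IsAssociatedSystem {n k : ℕ} (C : Submodule Fqm (Fin n → Fqm))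
    (U : Submodule Fq (Fin k → Fqm)) : Prop :=
  ∃ G : Fin k → Fin n → Fqm, IsGenMatrix Fqm C G ∧
    U = span Fq (Set.range fun j : Fin n => fun i : Fin k => G i j)

/-- `U` is an `[n,k]` system: an `n`-dimensional `Fq`-subspace of `Fqm^k` whose
`Fqm`-span is everything. -/
def IsSystem {k : ℕ} (n : ℕ) (U : Submodule Fq (Fin k → Fqm)) : Prop :=
  finrank Fq ↥U = n ∧ span Fqm (U : Set (Fin k → Fqm)) = ⊤

/-- `U` is `(h,r)`-evasive: every `h`-dimensional `Fqm`-subspace meets `U` in `Fq`-dimension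
at most `r`. -/
def IsEvasive {k : ℕ} (U : Submodule Fq (Fin k → Fqm)) (h r : ℕ) : Prop :=
  ∀ W : Submodule Fqm (Fin k → Fqm), finrank Fqm ↥W = h →
    finrank Fq ↥(U ⊓ W.restrictScalars Fq) ≤ r

/-- A `k`-dimensional code `C ⊆ Fqm^n` is near MRD if `d₁(C) = n-k` and `dₛ(C) = n-k+s`
for all `2 ≤ s ≤ k`. -/
def IsNearMRD {n : ℕ} (k : ℕ) (C : Submodule Fqm (Fin n → Fqm)) : Prop :=
  grw Fq Fqm C 1 = n - k ∧ ∀ s : ℕ, 2 ≤ s → s ≤ k → grw Fq Fqm C s = n - k + s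

/-!
Let `L / K` be the field extension and `G` the generator matrix whose columns span `U`. The maps
`p ↦ G p` on `K ^ n` and `x ↦ x G` on `L ^ k` are adjoint, so taking duals and rational points
matches Galois closed spaces meeting `C` in dimension at least `s` with subspaces `W` of `L ^ k` of
codimension `s`, and `d_s` is `n` minus the maximal dimension of `U ⊓ W`.

If `U` is `h`-scattered with `h = k - 2`, it is `h'`-scattered for every `h' ≤ h`, which together
with the Singleton bound gives `d_s` for `s ≥ 2`. For `s = 1` one has to bound `U ⊓ W` for a
hyperplane `W = ker f`: as `(k - 1) * dim U = k * m`, scatteredness gives `E • U = L ^ k`, hence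
`E * f(U) = L`, for every `(k - 1)`-dimensional `E ≤ L`; this is impossible when `dim f(U) < k`,
since then some such `E` has `E * f(U)` inside the kernel of a nonzero functional. Conversely,
since `2k(k - 2) < km`, some nonzero linear form maps `U` into a `k`-dimensional subspace of `L`,
so `d_1 ≤ k`.
-/

section LinearAlgebra

variable {K L M : Type*} [Field K] [Field L] [Algebra K L] [AddCommGroup M] [Module K M]

theorem exists_le_finrank_eq (V : Submodule K M) {r : ℕ} (hr : r ≤ finrank K V) :
    ∃ S ≤ V, finrank K S = r := by
  obtain ⟨v, hv⟩ := exists_linearIndependent_of_le_finrank hr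
  have hvM : LinearIndependent K fun i ↦ (v i : M) := hv.map' V.subtype V.ker_subtype
  refine ⟨span K (Set.range fun i ↦ (v i : M)), ?_, ?_⟩
  · exact span_le.2 (Set.range_subset_iff.2 fun i ↦ (v i).2)
  · rw [finrank_span_eq_card hvM, Fintype.card_fin]

theorem span_range_coe_basis {V : Submodule K M} {ι : Type*} (b : Basis ι K V) :
    span K (Set.range fun i ↦ (b i : M)) = V := by
  have := congrArg (Submodule.map V.subtype) b.span_eq
  rwa [Submodule.map_span, ← Set.range_comp, Submodule.map_top, range_subtype] at this

theorem finrank_map_add_finrank_inf_ker {N : Type*} [AddCommGroup N] [Module K N]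
    [FiniteDimensional K M] (f : M →ₗ[K] N) (U : Submodule K M) :
    finrank K (U.map f) + finrank K ↥(U ⊓ LinearMap.ker f) = finrank K U := by
  have hker : (LinearMap.ker (f.domRestrict U)).map U.subtype = U ⊓ LinearMap.ker f := by
    rw [LinearMap.ker_domRestrict, Submodule.map_comap_subtype]
  rw [← LinearMap.finrank_range_add_finrank_ker (f.domRestrict U), LinearMap.range_domRestrict,
    ← hker, finrank_map_subtype_eq]

theorem finrank_map_eq_of_finrank_range_eq {N : Type*} [AddCommGroup N] [Module K N]
    [FiniteDimensional K M] {f : M →ₗ[K] N}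
    (hf : finrank K (LinearMap.range f) = finrank K M) (U : Submodule K M) :
    finrank K (U.map f) = finrank K U := by
  have hrank := f.finrank_range_add_finrank_ker
  have hmap := finrank_map_add_finrank_inf_ker f U
  have hle : finrank K ↥(U ⊓ LinearMap.ker f) ≤ finrank K (LinearMap.ker f) :=
    finrank_mono inf_le_right
  omega

theorem exists_surjective_ker_eq [FiniteDimensional K M] (W : Submodule K M)
    (hW : finrank K W + 1 = finrank K M) :
    ∃ f : M →ₗ[K] K, Function.Surjective f ∧ LinearMap.ker f = W := by
  have hquot : finrank K (M ⧸ W) = finrank K K := by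
    have := W.finrank_quotient_add_finrank
    rw [finrank_self]
    omega
  let e := LinearEquiv.ofFinrankEq (M ⧸ W) K hquot
  exact ⟨e ∘ₗ W.mkQ, e.surjective.comp W.mkQ_surjective, by simp⟩

/- For a nonzero functional `φ : L → K`, take `E` inside the space of all `x` with
`φ (x * y) = 0` for every `y ∈ X`: then `E * X ≤ ker φ`. -/
theorem exists_finrank_eq_mul_ne_top [FiniteDimensional K L] (X : Submodule K L) {r : ℕ}
    (hr : r + finrank K X ≤ finrank K L) :
    ∃ E : Submodule K L, finrank K E = r ∧ E * X ≠ ⊤ := by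
  obtain ⟨φ, hφ⟩ := exists_ne (0 : Module.Dual K L)
  let pairing : L →ₗ[K] Module.Dual K X := ((LinearMap.mul K L).compr₂ φ).compl₂ X.subtype
  have hker : r ≤ finrank K (LinearMap.ker pairing) := by
    have := pairing.finrank_range_add_finrank_ker
    have := (LinearMap.range pairing).finrank_le
    rw [Subspace.dual_finrank_eq] at this
    omega
  obtain ⟨E, hE, hEr⟩ := exists_le_finrank_eq _ hker
  have hEX : E * X ≤ LinearMap.ker φ :=
    Submodule.mul_le.2 fun e he x hx ↦ LinearMap.congr_fun (hE he) ⟨x, hx⟩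
  refine ⟨E, hEr, fun htop ↦ hφ (LinearMap.ker_eq_top.1 (top_le_iff.1 (htop ▸ hEX)))⟩

variable [Module L M] [IsScalarTower K L M]

theorem linearIndependent_basis_of_finrank_le_finrank_span {V : Submodule K M} {ι : Type*}
    [Finite ι] (b : Basis ι K V) (hV : finrank K V ≤ finrank L (span L (V : Set M))) :
    LinearIndependent L fun i ↦ (b i : M) := by
  have := Fintype.ofFinite ι
  rw [linearIndependent_iff_card_le_finrank_span, ← finrank_eq_card_basis b, Set.finrank,
    ← span_span_of_tower K L, span_range_coe_basis b]
  exact hV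

theorem eq_zero_of_sum_smul_eq_zero {ι : Type*} [Fintype ι] {e : ι → L}
    (he : LinearIndependent K e) {w : ι → M}
    (hw : finrank K (span K (Set.range w)) ≤
      finrank L (span L (span K (Set.range w) : Set M)))
    (hsum : ∑ i, e i • w i = 0) : w = 0 := by
  set V := span K (Set.range w)
  have : FiniteDimensional K V := FiniteDimensional.span_of_finite K (Set.finite_range w)
  let b := finBasis K V
  let coeff (i : ι) := b.repr ⟨w i, subset_span ⟨i, rfl⟩⟩
  have hexp (i : ι) : w i = ∑ j, coeff i j • (b j : M) := by
    have := congrArg V.subtype (b.sum_repr ⟨w i, subset_span ⟨i, rfl⟩⟩)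
    simpa only [map_sum, map_smul, subtype_apply] using this.symm
  have hli := linearIndependent_smul he (linearIndependent_basis_of_finrank_le_finrank_span b hw)
  have hcoeff : ∑ p : ι × _, coeff p.1 p.2 • e p.1 • (b p.2 : M) = 0 := by
    rw [Fintype.sum_prod_type, ← hsum]
    refine Finset.sum_congr rfl fun i _ ↦ ?_
    conv_rhs => rw [hexp i, Finset.smul_sum]
    exact Finset.sum_congr rfl fun j _ ↦ smul_comm _ _ _
  ext i
  rw [hexp i]
  exact Finset.sum_eq_zero fun j _ ↦ by
    rw [Fintype.linearIndependent_iff.1 hli _ hcoeff (i, j), zero_smul]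

theorem injective_sum_smul {ι : Type*} [Fintype ι] {e : ι → L}
    (he : LinearIndependent K e) {U : Submodule K M}
    (hU : ∀ V ≤ U, finrank K V ≤ Fintype.card ι →
      finrank K V ≤ finrank L (span L (V : Set M))) :
    Function.Injective fun u : ι → U ↦ ∑ i, e i • (u i : M) := by
  intro u v huv
  let w (i : ι) : M := u i - v i
  have hle : span K (Set.range w) ≤ U :=
    span_le.2 (Set.range_subset_iff.2 fun i ↦ sub_mem (u i).2 (v i).2)
  have hsum : ∑ i, e i • w i = 0 := by
    simpa only [w, smul_sub, Finset.sum_sub_distrib, sub_eq_zero] using huv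
  have hw : w = 0 :=
    eq_zero_of_sum_smul_eq_zero he (hU _ hle (finrank_range_le_card (R := K) w)) hsum
  exact funext fun i ↦ Subtype.ext (sub_eq_zero.1 (congrFun hw i))

theorem smul_eq_top_of_finrank_mul_eq [FiniteDimensional K M]
    {E : Submodule K L} {U : Submodule K M}
    (hdim : finrank K E * finrank K U = finrank K M)
    (hU : ∀ V ≤ U, finrank K V ≤ finrank K E → finrank K V ≤ finrank L (span L (V : Set M))) :
    E • U = ⊤ := by
  obtain ⟨e, he⟩ := exists_linearIndependent_of_le_finrank (le_refl (finrank K E))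
  have heL : LinearIndependent K fun i ↦ (e i : L) := he.map' E.subtype E.ker_subtype
  let combine : (Fin (finrank K E) → U) →ₗ[K] M :=
    { toFun u := ∑ i, (e i : L) • (u i : M)
      map_add' u v := by simp [Finset.sum_add_distrib]
      map_smul' c u := by simp [Finset.smul_sum, smul_comm c] }
  have hinj : Function.Injective combine := injective_sum_smul heL (by simpa using hU)
  have hfinrank : finrank K (Fin (finrank K E) → U) = finrank K M := by
    simpa [Module.finrank_pi_fintype] using hdim
  have hsurj : Function.Surjective combine :=
    (LinearMap.injective_iff_surjective_of_finrank_eq_finrank hfinrank).1 hinj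
  refine eq_top_iff.2 fun x _ ↦ ?_
  obtain ⟨u, rfl⟩ := hsurj x
  change ∑ i, (e i : L) • (u i : M) ∈ E • U
  exact sum_mem fun i _ ↦ smul_mem_smul (e i).2 (u i).2

/- A `K`-dimension count produces a nonzero `L`-linear form mapping `U` into `X`. -/
theorem exists_finrank_add_one_eq_and_finrank_le [FiniteDimensional K L]
    [FiniteDimensional K M] (U : Submodule K M) (X : Submodule K L)
    (h : finrank K U * finrank K (L ⧸ X) < finrank K M) :
    ∃ W : Submodule L M, finrank L W + 1 = finrank L M ∧
      finrank K U ≤ finrank K ↥(U ⊓ W.restrictScalars K) + finrank K X := by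
  have := FiniteDimensional.right K L M
  let reduce : Module.Dual L M →ₗ[K] (U →ₗ[K] L ⧸ X) :=
    { toFun f := X.mkQ ∘ₗ f.restrictScalars K ∘ₗ U.subtype
      map_add' f g := by ext; simp
      map_smul' c f := by ext; simp }
  have hker : LinearMap.ker reduce ≠ ⊥ := by
    apply LinearMap.ker_ne_bot_of_finrank_lt
    rwa [Module.finrank_linearMap, ← finrank_mul_finrank K L (Module.Dual L M),
      Subspace.dual_finrank_eq, finrank_mul_finrank]
  obtain ⟨f, hf, hf0⟩ := exists_mem_ne_zero_of_ne_bot hker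
  have hmap : U.map (f.restrictScalars K) ≤ X := by
    rintro _ ⟨u, hu, rfl⟩
    exact (Submodule.Quotient.mk_eq_zero X).1 (LinearMap.congr_fun hf ⟨u, hu⟩)
  refine ⟨LinearMap.ker f, f.finrank_ker_add_one_of_ne_zero hf0, ?_⟩
  have hrank := finrank_map_add_finrank_inf_ker (f.restrictScalars K) U
  rw [LinearMap.ker_restrictScalars] at hrank
  have := finrank_mono hmap
  omega

theorem exists_finrank_eq_add_and_le_finrank_inf [FiniteDimensional K M]
    {U : Submodule K M} (hU : span L (U : Set M) = ⊤) (W : Submodule L M) (j : ℕ)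
    (hj : finrank L W + j ≤ finrank L M) :
    ∃ W' : Submodule L M, finrank L W' = finrank L W + j ∧
      finrank K ↥(U ⊓ W.restrictScalars K) + j ≤ finrank K ↥(U ⊓ W'.restrictScalars K) := by
  have := FiniteDimensional.right K L M
  induction j with
  | zero => exact ⟨W, rfl, le_rfl⟩
  | succ j ih =>
    obtain ⟨W', hW', hinf⟩ := ih (by omega)
    obtain ⟨u, huU, huW⟩ : ∃ u ∈ U, u ∉ W' := by
      by_contra! hUW
      have htop : W' = ⊤ := top_le_iff.1 (hU ▸ span_le.2 hUW)
      rw [htop, finrank_top] at hW'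
      omega
    have hlt : U ⊓ W'.restrictScalars K < U ⊓ (W' ⊔ span L {u}).restrictScalars K := by
      have hle : W'.restrictScalars K ≤ (W' ⊔ span L {u}).restrictScalars K :=
        fun _ hx ↦ mem_sup_left (S := W') hx
      have hu : u ∈ W' ⊔ span L {u} := mem_sup_right (mem_span_singleton_self u)
      exact lt_of_le_of_ne (inf_le_inf_left U hle) fun heq ↦ huW (heq.ge ⟨huU, hu⟩).2
    refine ⟨W' ⊔ span L {u}, ?_, ?_⟩
    · rw [finrank_sup_span_singleton huW, hW', add_assoc]
    · have := finrank_lt_finrank_of_lt hlt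
      omega

end LinearAlgebra

section Duality

variable {L : Type} [Field L] {n : ℕ}

theorem mem_dualCode_iff {C : Submodule L (Fin n → L)} {v : Fin n → L} :
    v ∈ dualCode L C ↔ ∀ c ∈ C, c ⬝ᵥ v = 0 :=
  Iff.rfl

theorem finrank_dualCode_add_finrank (C : Submodule L (Fin n → L)) :
    finrank L (dualCode L C) + finrank L C = n := by
  have hdual : dualCode L C =
      C.dualAnnihilator.map (dotProductEquiv L (Fin n)).symm.toLinearMap := by
    ext v
    rw [Submodule.map_equiv_eq_comap_symm]
    simp [mem_dualCode_iff, mem_dualAnnihilator, dotProduct_comm v]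
  have hfinrank := Subspace.finrank_add_finrank_dualAnnihilator_eq C
  rw [finrank_fin_fun] at hfinrank
  rw [hdual, LinearEquiv.finrank_map_eq]
  omega

end Duality

section GaloisDescent

variable {K L : Type} [Field K] [Field L] [Algebra K L] {n : ℕ}

theorem GaloisClosed.dualCode {A : Submodule L (Fin n → L)} (hA : GaloisClosed K L A) :
    GaloisClosed K L (dualCode L A) := by
  intro θ v hv c hc
  simpa using congrArg θ (hv _ (hA θ.symm c hc))

variable (K) in
/-- The `K`-rational points of an `L`-subspace `A` of `L ^ n`, as a subspace of `K ^ n`. -/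
def rationalPoints (A : Submodule L (Fin n → L)) : Submodule K (Fin n → K) :=
  (A.restrictScalars K).comap (Pi.algebraMap (Fin n) K L)

variable (L) in
/-- The extension of scalars of a `K`-subspace `P` of `K ^ n`, realised inside `L ^ n`. -/
def scalarExtension (P : Submodule K (Fin n → K)) : Submodule L (Fin n → L) :=
  span L (P.map (Pi.algebraMap (Fin n) K L) : Set (Fin n → L))

theorem finrank_scalarExtension (P : Submodule K (Fin n → K)) :
    finrank L (scalarExtension L P) = finrank K P := by
  let b := finBasis K P
  have hb : LinearIndependent L fun i ↦ algebraMap K L ∘ (b i : Fin n → K) :=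
    linearIndependent_algebraMap_comp_iff.2 (b.linearIndependent.map' P.subtype P.ker_subtype)
  have hspan : scalarExtension L P = span L (Set.range fun i ↦ algebraMap K L ∘ (b i)) := by
    conv_lhs => rw [scalarExtension, ← span_range_coe_basis b]
    rw [Submodule.map_span, span_span_of_tower, ← Set.range_comp]
    rfl
  rw [hspan, finrank_span_eq_card hb, Fintype.card_fin]

theorem galoisClosed_scalarExtension (P : Submodule K (Fin n → K)) :
    GaloisClosed K L (scalarExtension L P) := by
  intro θ v hv
  induction hv using Submodule.span_induction with
  | mem x hx =>
    obtain ⟨p, hp, rfl⟩ := hx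
    refine subset_span ⟨p, hp, ?_⟩
    ext i
    exact (θ.commutes (p i)).symm
  | zero => simp [← Pi.zero_def]
  | add x y _ _ hx hy => simpa [← Pi.add_def] using add_mem hx hy
  | smul a x _ hx => simpa using! smul_mem _ (θ a) hx

/- For a basis `b` with trace-dual basis `d`, each `v ∈ A` equals `∑ i, d i • Tr (b i • v)`, and
`Tr (b i • v) = ∑ θ, θ (b i • v)` is a rational point of `A`. -/
theorem GaloisClosed.scalarExtension_rationalPoints [FiniteDimensional K L] [IsGalois K L]
    {A : Submodule L (Fin n → L)} (hA : GaloisClosed K L A) :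
    scalarExtension L (rationalPoints K A) = A := by
  refine le_antisymm (span_le.2 (map_comap_le _ _)) fun v hv ↦ ?_
  let b := finBasis K L
  let trace (i) : Fin n → K := fun j ↦ Algebra.trace K L (b i * v j)
  have htrace (i) : trace i ∈ rationalPoints K A := by
    have hsum : Pi.algebraMap (Fin n) K L (trace i) =
        ∑ θ : L ≃ₐ[K] L, fun j ↦ θ ((b i • v) j) := by
      ext j
      simp [trace, Pi.algebraMap, trace_eq_sum_automorphisms]
    rw [rationalPoints, mem_comap, hsum]
    exact sum_mem fun θ _ ↦ hA θ _ (A.smul_mem _ hv)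
  have hexp : v = ∑ i, b.traceDual i • Pi.algebraMap (Fin n) K L (trace i) := by
    ext j
    conv_lhs => rw [← b.traceDual.sum_repr (v j)]
    simp [trace, Pi.algebraMap, Algebra.smul_def, mul_comm]
  rw [hexp]
  exact sum_mem fun i _ ↦ smul_mem _ _ (subset_span (mem_map_of_mem (htrace i)))

theorem GaloisClosed.finrank_rationalPoints [FiniteDimensional K L] [IsGalois K L]
    {A : Submodule L (Fin n → L)} (hA : GaloisClosed K L A) :
    finrank K (rationalPoints K A) = finrank L A := by
  rw [← finrank_scalarExtension (L := L), hA.scalarExtension_rationalPoints]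

end GaloisDescent

section Evasive

variable {K L : Type} [Field K] [Field L] [Algebra K L] [FiniteDimensional K L] {k h r : ℕ}
  {U : Submodule K (Fin k → L)}

theorem IsEvasive.of_add (hspan : span L (U : Set (Fin k → L)) = ⊤) {j : ℕ} (hj : h + j ≤ k)
    (hU : IsEvasive K L U (h + j) (r + j)) : IsEvasive K L U h r := by
  intro W hW
  obtain ⟨W', hW', hinf⟩ :=
    exists_finrank_eq_add_and_le_finrank_inf hspan W j (by simpa [hW] using hj)
  have := hU W' (by rw [hW', hW])
  omega

theorem IsEvasive.scattered_of_le (hspan : span L (U : Set (Fin k → L)) = ⊤)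
    (hU : IsEvasive K L U h h) (hk : h ≤ k) {h' : ℕ} (hle : h' ≤ h) : IsEvasive K L U h' h' := by
  obtain ⟨j, rfl⟩ := Nat.exists_eq_add_of_le hle
  exact hU.of_add hspan hk

theorem IsEvasive.finrank_le_finrank_span (hspan : span L (U : Set (Fin k → L)) = ⊤)
    (hU : IsEvasive K L U h h) (hk : h ≤ k) {V : Submodule K (Fin k → L)} (hVU : V ≤ U)
    (hV : finrank K V ≤ h + 1) : finrank K V ≤ finrank L (span L (V : Set (Fin k → L))) := by
  by_contra! hlt
  have hinf := hU.scattered_of_le hspan hk (by omega) (span L (V : Set (Fin k → L))) rfl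
  have hmono : finrank K V ≤
      finrank K ↥(U ⊓ (span L (V : Set (Fin k → L))).restrictScalars K) :=
    finrank_mono (le_inf hVU subset_span)
  omega

/- With `X` the image of `U` under a linear form with kernel `W`, every `(h + 1)`-dimensional
`E ≤ L` satisfies `E • U = ⊤` and hence `E * X = ⊤`, which forces `X` to be large. -/
theorem IsEvasive.finrank_inf_hyperplane_le (hspan : span L (U : Set (Fin k → L)) = ⊤)
    (hU : IsEvasive K L U h h) (hk : h ≤ k)
    (hmax : (h + 1) * finrank K U = k * finrank K L) {W : Submodule L (Fin k → L)}
    (hW : finrank L W + 1 = k) :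
    finrank K ↥(U ⊓ W.restrictScalars K) + finrank K L ≤ finrank K U + h := by
  obtain ⟨f, hf, rfl⟩ := exists_surjective_ker_eq W (by simpa using hW)
  let g := f.restrictScalars K
  have hrank : finrank K (U.map g) + finrank K ↥(U ⊓ (LinearMap.ker f).restrictScalars K) =
      finrank K U := finrank_map_add_finrank_inf_ker g U
  by_contra! hlt
  obtain ⟨E, hE, hmul⟩ :=
    exists_finrank_eq_mul_ne_top (U.map g) (r := h + 1) (by omega)
  have hsmul : E • U = ⊤ := smul_eq_top_of_finrank_mul_eq
    (by rw [hE, hmax, Module.finrank_pi_fintype]; simp)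
    fun V hVU hV ↦ hU.finrank_le_finrank_span hspan hk hVU (hE ▸ hV)
  have hle : E • U ≤ (E * U.map g).comap g := Submodule.smul_le.2 fun e he u hu ↦ by
    simpa [g] using Submodule.mul_mem_mul he (mem_map_of_mem (f := g) hu)
  refine hmul (eq_top_iff.2 fun x _ ↦ ?_)
  obtain ⟨z, rfl⟩ := hf x
  exact hle (hsmul ▸ mem_top)

end Evasive

section CodesAndSystems

variable {K L : Type} [Field K] [Field L] [Algebra K L] {n k : ℕ} {G : Fin k → Fin n → L}
  {C : Submodule L (Fin n → L)} {U : Submodule K (Fin k → L)}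

variable (K) in
/-- The `K`-linear map `p ↦ G p` from `K ^ n` to `L ^ k`, whose range is the `K`-span of the
columns of `G`. It is adjoint to the `L`-linear encoder `Fintype.linearCombination L G`, see
`dotProduct_columnMap`. -/
def columnMap (G : Fin k → Fin n → L) : (Fin n → K) →ₗ[K] (Fin k → L) :=
  Fintype.linearCombination K fun j i ↦ G i j

theorem range_columnMap (G : Fin k → Fin n → L) :
    LinearMap.range (columnMap K G) = span K (Set.range fun j i ↦ G i j) :=
  Fintype.range_linearCombination K _

theorem dotProduct_columnMap (x : Fin k → L) (p : Fin n → K) :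
    x ⬝ᵥ columnMap K G p =
      Pi.algebraMap (Fin n) K L p ⬝ᵥ Fintype.linearCombination L G x := by
  simp only [columnMap, Fintype.linearCombination_apply, dotProduct, Finset.sum_apply,
    Pi.smul_apply, Finset.mul_sum]
  rw [Finset.sum_comm]
  refine Finset.sum_congr rfl fun j _ ↦ Finset.sum_congr rfl fun i _ ↦ ?_
  simp [Pi.algebraMap, Algebra.smul_def, mul_left_comm]

theorem mem_dualCode_scalarExtension_iff {P : Submodule K (Fin n → K)} {v : Fin n → L} :
    v ∈ dualCode L (scalarExtension L P) ↔
      ∀ p ∈ P, Pi.algebraMap (Fin n) K L p ⬝ᵥ v = 0 := by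
  refine ⟨fun hv p hp ↦ hv _ (subset_span (mem_map_of_mem hp)), fun hv c hc ↦ ?_⟩
  have hle : scalarExtension L P ≤ LinearMap.ker ((dotProductBilin L L).flip v) :=
    span_le.2 <| by rintro _ ⟨p, hp, rfl⟩; exact hv p hp
  exact hle hc

theorem map_dualCode_le_dualCode_scalarExtension (W : Submodule L (Fin k → L)) :
    (dualCode L W).map (Fintype.linearCombination L G) ≤
      dualCode L (scalarExtension L ((W.restrictScalars K).comap (columnMap K G))) := by
  rintro _ ⟨x, hx, rfl⟩
  refine mem_dualCode_scalarExtension_iff.2 fun p hp ↦ ?_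
  rw [← dotProduct_columnMap, dotProduct_comm]
  exact hx _ hp

theorem map_rationalPoints_dualCode_le (A : Submodule L (Fin n → L)) :
    (rationalPoints K (dualCode L A)).map (columnMap K G) ≤
      (dualCode L (A.comap (Fintype.linearCombination L G))).restrictScalars K := by
  rintro _ ⟨p, hp, rfl⟩ x hx
  change x ⬝ᵥ columnMap K G p = 0
  rw [dotProduct_columnMap, dotProduct_comm]
  exact hp _ hx

theorem IsGenMatrix.range_linearCombination (hG : IsGenMatrix L C G) :
    LinearMap.range (Fintype.linearCombination L G) = C :=
  (Fintype.range_linearCombination L G).trans hG.symm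

theorem IsGenMatrix.ker_columnMap (hG : IsGenMatrix L C G) :
    LinearMap.ker (columnMap K G) = rationalPoints K (dualCode L C) := by
  ext p
  have hmem : columnMap K G p = 0 ↔ ∀ x, x ⬝ᵥ columnMap K G p = 0 := by
    simp only [dotProduct_comm _ (columnMap K G p), dotProduct_eq_zero_iff]
  simp only [LinearMap.mem_ker, hmem, dotProduct_columnMap]
  change _ ↔ ∀ c ∈ C, c ⬝ᵥ Pi.algebraMap (Fin n) K L p = 0
  simp only [← hG.range_linearCombination, LinearMap.mem_range, forall_exists_index,
    forall_apply_eq_imp_iff, dotProduct_comm]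

theorem IsAssociatedSystem.finrank_eq (hU : IsAssociatedSystem K L C U)
    (hC : IsNondegenerate K L k C) : finrank K U = n := by
  obtain ⟨G, hG, rfl⟩ := hU
  obtain ⟨G', hG', hn⟩ := hC
  have hrank := (columnMap K G).finrank_range_add_finrank_ker
  have hrank' := (columnMap K G').finrank_range_add_finrank_ker
  rw [range_columnMap, hG.ker_columnMap] at hrank
  rw [range_columnMap, hG'.ker_columnMap] at hrank'
  omega

theorem IsAssociatedSystem.span_eq_top (hU : IsAssociatedSystem K L C U)
    (hC : finrank L C = k) : span L (U : Set (Fin k → L)) = ⊤ := by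
  obtain ⟨G, hG, rfl⟩ := hU
  refine eq_top_of_finrank_eq ?_
  rw [span_span_of_tower, finrank_fin_fun]
  have hcols : finrank L (span L (Set.range fun j i ↦ G i j)) = Matrix.rank (Matrix.of G) :=
    (Matrix.rank_eq_finrank_span_cols (Matrix.of G)).symm
  rw [hcols, Matrix.rank_eq_finrank_span_row]
  exact hG ▸ hC

/- The Galois closed space witnessing the bound is the dual of the scalar extension of the
preimage of `W` in `K ^ n`. -/
theorem IsAssociatedSystem.grw_add_finrank_inf_le (hU : IsAssociatedSystem K L C U)
    (hC : finrank L C = k) {s : ℕ} {W : Submodule L (Fin k → L)} (hW : finrank L W + s ≤ k) :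
    grw K L C s + finrank K ↥(U ⊓ W.restrictScalars K) ≤ n := by
  obtain ⟨G, hG, rfl⟩ := hU
  let P := (W.restrictScalars K).comap (columnMap K G)
  have hP : finrank K ↥(span K (Set.range fun j i ↦ G i j) ⊓ W.restrictScalars K) ≤
      finrank K P := by
    rw [← range_columnMap, ← Submodule.map_comap_eq]
    exact finrank_map_le _ _
  let A := dualCode L (scalarExtension L P)
  have hA : finrank L A + finrank K P = n := by
    rw [← finrank_scalarExtension (L := L) P, finrank_dualCode_add_finrank]
  have hsub : (dualCode L W).map (Fintype.linearCombination L G) ≤ A ⊓ C :=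
    le_inf (map_dualCode_le_dualCode_scalarExtension W)
      (hG.range_linearCombination ▸ LinearMap.map_le_range)
  have hs : s ≤ finrank L ↥(A ⊓ C) := by
    have hle := finrank_mono hsub
    rw [finrank_map_eq_of_finrank_range_eq (by rw [hG.range_linearCombination, hC,
      finrank_fin_fun])] at hle
    have := finrank_dualCode_add_finrank W
    omega
  have hgrw : grw K L C s ≤ finrank L A :=
    Nat.sInf_le ⟨A, (galoisClosed_scalarExtension P).dualCode, hs, rfl⟩
  omega

theorem exists_galoisClosed_finrank_eq_grw {s : ℕ} (hs : s ≤ finrank L C) :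
    ∃ A : Submodule L (Fin n → L),
      GaloisClosed K L A ∧ s ≤ finrank L ↥(A ⊓ C) ∧ finrank L A = grw K L C s := by
  refine Nat.sInf_mem (s := {x | ∃ A : Submodule L (Fin n → L),
    GaloisClosed K L A ∧ s ≤ finrank L ↥(A ⊓ C) ∧ finrank L A = x}) ?_
  exact ⟨_, ⊤, fun _ _ _ ↦ mem_top, by rwa [top_inf_eq], rfl⟩

theorem IsAssociatedSystem.le_grw_add_of_isEvasive [FiniteDimensional K L] [IsGalois K L]
    (hU : IsAssociatedSystem K L C U) (hn : finrank K U = n) {s r : ℕ} (hs : s ≤ finrank L C)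
    (hr : IsEvasive K L U (k - s) r) : n ≤ grw K L C s + r := by
  obtain ⟨G, hG, rfl⟩ := hU
  obtain ⟨A, hA, hAs, hAgrw⟩ := exists_galoisClosed_finrank_eq_grw (K := K) hs
  have hcomap : s ≤ finrank L (A.comap (Fintype.linearCombination L G)) := by
    refine hAs.trans ?_
    rw [inf_comm, ← hG.range_linearCombination, ← Submodule.map_comap_eq]
    exact finrank_map_le _ _
  obtain ⟨S, hSA, hS⟩ := exists_le_finrank_eq _ hcomap
  have hW : finrank L (dualCode L S) = k - s := by
    have := finrank_dualCode_add_finrank S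
    omega
  let P := rationalPoints K (dualCode L A)
  have hP : finrank K P + finrank L A = n := by
    rw [hA.dualCode.finrank_rationalPoints, finrank_dualCode_add_finrank]
  have hsub : P.map (columnMap K G) ≤
      span K (Set.range fun j i ↦ G i j) ⊓ (dualCode L S).restrictScalars K :=
    le_inf (range_columnMap (K := K) G ▸ LinearMap.map_le_range)
      ((map_rationalPoints_dualCode_le A).trans fun _ hw x hx ↦ hw x (hSA hx))
  have hle := (finrank_mono hsub).trans (hr _ hW)
  rw [finrank_map_eq_of_finrank_range_eq (by rw [range_columnMap, hn,
    finrank_fin_fun])] at hle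
  omega

theorem IsAssociatedSystem.grw_add_le [FiniteDimensional K L]
    (hU : IsAssociatedSystem K L C U) (hC : finrank L C = k) {s : ℕ} (hs : s ≤ k) :
    grw K L C s + k ≤ n + s := by
  obtain ⟨W, hW, hinf⟩ :=
    exists_finrank_eq_add_and_le_finrank_inf (hU.span_eq_top hC) ⊥ (k - s) (by simp)
  have := hU.grw_add_finrank_inf_le (s := s) (W := W) hC (by rw [hW, finrank_bot]; omega)
  omega

theorem IsAssociatedSystem.grw_one_le [FiniteDimensional K L]
    (hU : IsAssociatedSystem K L C U) (hC : finrank L C = k) (hn : finrank K U = n) {r t : ℕ}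
    (hrt : t + r = finrank K L) (hlt : n * t < k * finrank K L) : grw K L C 1 ≤ r := by
  obtain ⟨X, -, hX⟩ :=
    exists_le_finrank_eq (⊤ : Submodule K L) (r := r) (by rw [finrank_top]; omega)
  have hquot : finrank K (L ⧸ X) = t := by rw [X.finrank_quotient, hX]; omega
  obtain ⟨W, hW, hinf⟩ := exists_finrank_add_one_eq_and_finrank_le U X
    (by rwa [hn, hquot, Module.finrank_pi_fintype, Fin.sum_const, smul_eq_mul])
  have := hU.grw_add_finrank_inf_le (W := W) hC (by rw [hW, finrank_fin_fun])
  omega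

end CodesAndSystems

theorem stmt16_general [IsGalois Fq Fqm] (k : ℕ) (hk : 2 ≤ k) (hm : finrank Fq Fqm = 2 * k - 2)
    (C : Submodule Fqm (Fin (2 * k) → Fqm)) (hdim : finrank Fqm ↥C = k)
    (hnd : IsNondegenerate Fq Fqm k C)
    (U : Submodule Fq (Fin k → Fqm)) (hU : IsAssociatedSystem Fq Fqm C U) :
    IsNearMRD Fq Fqm k C ↔ IsEvasive Fq Fqm U (k - 2) (k - 2) := by
  have : FiniteDimensional Fq Fqm := FiniteDimensional.of_finrank_pos (by omega)
  have hUn := hU.finrank_eq hnd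
  have hspan := hU.span_eq_top hdim
  refine ⟨fun ⟨_, hgrw⟩ W hW ↦ ?_, fun hscat ↦ ⟨le_antisymm ?_ ?_, fun s hs hsk ↦ ?_⟩⟩
  · have := hU.grw_add_finrank_inf_le (s := 2) (W := W) hdim (by omega)
    have := hgrw 2 le_rfl hk
    omega
  · refine hU.grw_one_le (t := k - 2) hdim hUn (by omega) ?_
    rw [hm, mul_comm 2 k, mul_assoc]
    exact Nat.mul_lt_mul_of_pos_left (by omega) (by omega)
  · have hmax : (k - 2 + 1) * finrank Fq U = k * finrank Fq Fqm := by
      rw [hUn, hm, show 2 * k - 2 = (k - 2 + 1) * 2 by omega]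
      ring
    have hevasive : IsEvasive Fq Fqm U (k - 1) k := fun W hW ↦ by
      have := hscat.finrank_inf_hyperplane_le hspan (Nat.sub_le k 2) hmax (W := W) (by omega)
      omega
    have := hU.le_grw_add_of_isEvasive hUn (s := 1) (by omega) hevasive
    omega
  · have hlower := hU.le_grw_add_of_isEvasive hUn (s := s) (by omega)
      (hscat.scattered_of_le hspan (Nat.sub_le k 2) (by omega))
    have hupper := hU.grw_add_le hdim hsk
    omega

/-- for `m = 2k-2` and `n = 2k`, `C` is near MRD iff its associated system is
`(k-2)`-scattered. -/
theorem stmt16 [Fintype Fq] (k : ℕ) (hk : 2 ≤ k) (hm : finrank Fq Fqm = 2 * k - 2)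
    (C : Submodule Fqm (Fin (2 * k) → Fqm)) (hdim : finrank Fqm ↥C = k)
    (hnd : IsNondegenerate Fq Fqm k C)
    (U : Submodule Fq (Fin k → Fqm)) (hU : IsAssociatedSystem Fq Fqm C U) :
    IsNearMRD Fq Fqm k C ↔ IsEvasive Fq Fqm U (k - 2) (k - 2) := by
  have : FiniteDimensional Fq Fqm := FiniteDimensional.of_finrank_pos (by omega)
  have : Finite Fqm := Module.finite_of_finite Fq
  exact stmt16_general Fq Fqm k hk hm C hdim hnd U hU
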